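/- arXiv:2305.02967 — 8 statements merged into one kernel-verified Lean document; each statement's English description precedes it below -/
import Mathlib

section
/- The reach objective is right-separating: let Σ be any type with a distinguished letter r ∈ Σ, and let R_r = Σ*·{r}·Σ* be the objective consisting of all words over Σ containing at least one occurrence of r. Then for all elements x, y of the monoid with zero M = Σ* ∪ {⊥}, x ≼_LR y holds (with respect to R_r) if and only if x ≼_R y holds (with respect to R_r). -/
/-- Membership of an element of the monoid with zero `M = Σ* ∪ {⊥}` in an
objective `O ⊆ Σ*`: the element is a (nonzero) word belonging to `O`. -/
def memObj {α : Type*} (O : Set (FreeMonoid α)) (x : WithZero (FreeMonoid α)) : Prop :=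
  ∃ w ∈ O, x = (w : WithZero (FreeMonoid α))

/-- The syntactic precongruence `≼_LR` induced by an objective `O` on `M`. -/
def preLR {α : Type*} (O : Set (FreeMonoid α)) (x y : WithZero (FreeMonoid α)) : Prop :=
  ∀ u w : FreeMonoid α,
    memObj O ((u : WithZero (FreeMonoid α)) * x * (w : WithZero (FreeMonoid α))) →
    memObj O ((u : WithZero (FreeMonoid α)) * y * (w : WithZero (FreeMonoid α)))

/-- The right precongruence `≼_R` induced by an objective `O` on `M`. -/
def preR {α : Type*} (O : Set (FreeMonoid α)) (x y : WithZero (FreeMonoid α)) : Prop :=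
  ∀ w : FreeMonoid α,
    memObj O (x * (w : WithZero (FreeMonoid α))) →
    memObj O (y * (w : WithZero (FreeMonoid α)))

/-- The reach objective `R_r = Σ*·{r}·Σ*`: all words containing the letter `r`. -/
def reachObj {α : Type*} (r : α) : Set (FreeMonoid α) :=
  {w : FreeMonoid α | r ∈ FreeMonoid.toList w}

/-!
A product contains `r` exactly when one of its factors does, so suppose more generally that `O`
contains a product of words iff it contains one of the factors, and let `x ≼_R y` and `u·x·w ∈ O`.
Then `x·w ∈ O` or `u ∈ O`. In the first case `y·w ∈ O`, hence `u·y·w ∈ O`. In the second,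
testing `x ≼_R y` against `u` itself, `x·u ∈ O` gives `y·u ∈ O`; thus `y ≠ ⊥`, and `u ∈ O` already
forces `u·y·w ∈ O`.
-/

section Objective

variable {α : Type*} {O : Set (FreeMonoid α)} {x y : WithZero (FreeMonoid α)}

@[simp]
theorem memObj_coe {w : FreeMonoid α} : memObj O (w : WithZero (FreeMonoid α)) ↔ w ∈ O := by
  simp [memObj]

@[simp]
theorem not_memObj_zero : ¬ memObj O 0 := by
  simp [memObj]

theorem memObj.ne_zero (hx : memObj O x) : x ≠ 0 := by
  rintro rfl
  exact not_memObj_zero hx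

theorem preLR.preR (h : preLR O x y) : preR O x y := fun w hw => by
  simpa using h 1 w (by simpa using hw)

theorem memObj_mul_iff (hO : ∀ u v : FreeMonoid α, u * v ∈ O ↔ u ∈ O ∨ v ∈ O) :
    memObj O (x * y) ↔ (memObj O x ∧ y ≠ 0) ∨ (x ≠ 0 ∧ memObj O y) := by
  induction x using WithZero.recZeroCoe with
  | zero => simp
  | coe u =>
    induction y using WithZero.recZeroCoe with
    | zero => simp
    | coe v => simp [← WithZero.coe_mul, hO]

theorem preR.preLR (hO : ∀ u v : FreeMonoid α, u * v ∈ O ↔ u ∈ O ∨ v ∈ O)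
    (h : preR O x y) : preLR O x y := by
  intro u w huxw
  rw [mul_assoc, memObj_mul_iff hO] at huxw ⊢
  rcases huxw with ⟨hu, hxw⟩ | ⟨hu, hxw⟩
  · have hxu : memObj O (x * u) := (memObj_mul_iff hO).2 (.inr ⟨left_ne_zero_of_mul hxw, hu⟩)
    have hy : y ≠ 0 := left_ne_zero_of_mul (h u hxu).ne_zero
    exact .inl ⟨hu, mul_ne_zero hy WithZero.coe_ne_zero⟩
  · exact .inr ⟨hu, h w hxw⟩

end Objective

theorem mul_mem_reachObj_iff {α : Type*} {r : α} (u v : FreeMonoid α) :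
    u * v ∈ reachObj r ↔ u ∈ reachObj r ∨ v ∈ reachObj r := by
  simp [reachObj, FreeMonoid.toList_mul]

theorem reach_right_separating_general {α : Type*} {O : Set (FreeMonoid α)}
    (hO : ∀ u v : FreeMonoid α, u * v ∈ O ↔ u ∈ O ∨ v ∈ O) (x y : WithZero (FreeMonoid α)) :
    preLR O x y ↔ preR O x y :=
  ⟨preLR.preR, preR.preLR hO⟩

/-- The reach objective is right-separating. -/
theorem reach_right_separating (α : Type*) (r : α) :
    ∀ x y : WithZero (FreeMonoid α),
      preLR (reachObj r) x y ↔ preR (reachObj r) x y :=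
  reach_right_separating_general mul_mem_reachObj_iff
end

section
/- There are right-separating and domain-shattering objectives over every alphabet: for every nonempty type Σ there exists a language O ⊆ List Σ such that (i) for every word u : List Σ there exists a nonempty word v with u ++ v ∈ O, and (ii) for all words u, u' : List Σ with u ≠ u' there exists a nonempty word v with u ++ v ∈ O and u' ++ v ∉ O. -/
/-!
Take `O` to be the palindromes whose length is a power of two. A word `u` of length less than
`2 ^ j` is completed to a palindrome of length `2 ^ (j + 1)` by padding it and appending its
reverse. If another word `u'` of length less than `2 ^ j` replaces `u` in front of this suffix, the
total length stays strictly between `2 ^ j` and `2 ^ (j + 2)`, so it is a power of two only if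
`u'` has the length of `u`; the palindrome condition then forces `u' = u`.
-/

section

variable {α : Type*} {u u' w : List α}

theorem palindrome_append_append_reverse (hw : w.Palindrome) :
    (u ++ (w ++ u.reverse)).Palindrome := by
  rw [List.Palindrome.iff_reverse_eq]
  simp only [List.reverse_append, List.reverse_reverse, hw.reverse_eq, List.append_assoc]

theorem eq_of_palindrome_append_append_reverse (hlen : u'.length = u.length)
    (h : (u' ++ (w ++ u.reverse)).Palindrome) : u' = u := by
  have hrev : u ++ (w.reverse ++ u'.reverse) = u' ++ (w ++ u.reverse) := by
    simpa only [List.reverse_append, List.reverse_reverse, List.append_assoc] using h.reverse_eq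
  exact (List.append_inj_left hrev hlen.symm).symm

theorem eq_succ_of_pow_lt_pow_of_pow_lt_pow {b j m : ℕ} (hb : 1 < b)
    (hlt : b ^ j < b ^ m) (hgt : b ^ m < b ^ (j + 2)) : m = j + 1 := by
  rw [Nat.pow_lt_pow_iff_right hb] at hlt hgt
  omega

variable (α) in
/-- The language of palindromes whose length is a power of two, which serves as the objective. -/
def twoPowPalindromes : Set (List α) :=
  {x | x.Palindrome ∧ ∃ k : ℕ, x.length = 2 ^ k}

/-- The right context completing `u` to a palindrome of length `2 ^ (j + 1)`, with copies of `a` as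
padding. It has this effect only if `u.length ≤ 2 ^ j`, because of the truncated subtraction. -/
def mirrorCompletion (a : α) (j : ℕ) (u : List α) : List α :=
  List.replicate (2 ^ (j + 1) - 2 * u.length) a ++ u.reverse

variable {a : α} {j : ℕ}

theorem length_mirrorCompletion_add_length (hu : u.length ≤ 2 ^ j) :
    (mirrorCompletion a j u).length + u.length = 2 ^ (j + 1) := by
  simp only [mirrorCompletion, List.length_append, List.length_replicate, List.length_reverse]
  omega

theorem mirrorCompletion_ne_nil (a : α) (j : ℕ) (u : List α) : mirrorCompletion a j u ≠ [] := by
  cases u <;> simp [mirrorCompletion]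

theorem append_mirrorCompletion_mem (hu : u.length ≤ 2 ^ j) :
    u ++ mirrorCompletion a j u ∈ twoPowPalindromes α := by
  refine ⟨palindrome_append_append_reverse (.of_reverse_eq List.reverse_replicate), j + 1, ?_⟩
  rw [List.length_append, add_comm, length_mirrorCompletion_add_length hu]

theorem eq_of_append_mirrorCompletion_mem (hu : u.length < 2 ^ j) (hu' : u'.length < 2 ^ j)
    (h : u' ++ mirrorCompletion a j u ∈ twoPowPalindromes α) : u' = u := by
  obtain ⟨hpal, m, hm⟩ := h
  have hcompl : (mirrorCompletion a j u).length + u.length = 2 ^ (j + 1) :=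
    length_mirrorCompletion_add_length hu.le
  rw [List.length_append] at hm
  have hlower : 2 ^ j < 2 ^ m := by omega
  have hupper : 2 ^ m < 2 ^ (j + 2) := by
    rw [pow_succ' 2 (j + 1)]
    omega
  have hexp : m = j + 1 := eq_succ_of_pow_lt_pow_of_pow_lt_pow one_lt_two hlower hupper
  have hlen : u'.length = u.length := by
    subst hexp
    omega
  exact eq_of_palindrome_append_append_reverse hlen hpal

end

/-- There are right-separating and domain-shattering objectives over every
(nonempty) alphabet: a language such that every word can be completed into it
and any two distinct words are separated by some nonempty right context. -/
theorem exists_right_separating_domain_shattering (α : Type*) [Nonempty α] :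
    ∃ O : Set (List α),
      (∀ u : List α, ∃ v : List α, v ≠ [] ∧ u ++ v ∈ O) ∧
      (∀ u u' : List α, u ≠ u' →
        ∃ v : List α, v ≠ [] ∧ u ++ v ∈ O ∧ u' ++ v ∉ O) := by
  obtain ⟨a⟩ := ‹Nonempty α›
  refine ⟨twoPowPalindromes α, fun u ↦ ?_, fun u u' hne ↦ ?_⟩
  · exact ⟨mirrorCompletion a u.length u, mirrorCompletion_ne_nil a _ u,
      append_mirrorCompletion_mem Nat.lt_two_pow_self.le⟩
  · obtain ⟨j, hj⟩ : ∃ j : ℕ, u.length + u'.length < 2 ^ j := ⟨_, Nat.lt_two_pow_self⟩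
    have hu : u.length < 2 ^ j := by omega
    have hu' : u'.length < 2 ^ j := by omega
    exact ⟨mirrorCompletion a j u, mirrorCompletion_ne_nil a j u,
      append_mirrorCompletion_mem hu.le,
      fun hmem ↦ hne (eq_of_append_mirrorCompletion_mem hu hu' hmem).symm⟩
end

section
/- The even-palindrome language separates distinct words: let Σ be a type containing two distinct elements. Then for all words u, u' : List Σ with u ≠ u', there exists a nonempty word v : List Σ such that u ++ v ∈ O_pal and u' ++ v ∉ O_pal. -/
/-- The language of even-length palindromes over `α`. -/
def Opal (α : Type*) : Set (List α) :=
  {x : List α | ∃ w : List α, x = w ++ w.reverse}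

/-!
The word `z = aⁿb`, with `n` at least the lengths of `u` and `u'`, acts as a marker: two occurrences
of `z` starting at most `n` places apart coincide, since otherwise the final `b` of the earlier one
meets an `a` of the later one. Take `v = z (u z)ʳ`. Then `u v = (u z) (u z)ʳ` is an even palindrome.
If `u' v = (u' z) (u z)ʳ` were one too, reversing it would give `u' z (u z)ʳ = u z (u' z)ʳ`, and
the occurrences of `z` after `u'` and `u` would force `u' = u`.
-/

section Reverse

variable {α : Type*}

theorem reverse_eq_of_mem_opal {x : List α} (hx : x ∈ Opal α) : x.reverse = x := by
  obtain ⟨w, rfl⟩ := hx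
  rw [List.reverse_append, List.reverse_reverse]

theorem append_reverse_comm_of_mem_opal {x y : List α} (h : x ++ y.reverse ∈ Opal α) :
    x ++ y.reverse = y ++ x.reverse := by
  rw [← reverse_eq_of_mem_opal h, List.reverse_append, List.reverse_reverse]

end Reverse

section Marker

variable {α : Type*} {a b : α} {n : ℕ} {s t s' t' : List α}

theorem length_le_of_append_replicate_append_cons_eq (hab : a ≠ b)
    (hts : t.length ≤ s.length + n)
    (h : s ++ (List.replicate n a ++ b :: s') = t ++ (List.replicate n a ++ b :: t')) :
    t.length ≤ s.length := by
  by_contra! hlt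
  have left_letter : (s ++ (List.replicate n a ++ b :: s'))[s.length + n]? = some b := by
    simp
  have right_letter : (t ++ (List.replicate n a ++ b :: t'))[s.length + n]? = some a := by
    rw [List.getElem?_append_right hts, List.getElem?_append_left (by simp; omega),
      List.getElem?_replicate_of_lt (by omega)]
  exact hab (Option.some.inj (right_letter.symm.trans (h ▸ left_letter)))

theorem eq_of_append_replicate_append_cons_eq (hab : a ≠ b)
    (hst : s.length ≤ t.length + n) (hts : t.length ≤ s.length + n)
    (h : s ++ (List.replicate n a ++ b :: s') = t ++ (List.replicate n a ++ b :: t')) :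
    s = t :=
  have hlen : s.length = t.length :=
    le_antisymm (length_le_of_append_replicate_append_cons_eq hab hst h.symm)
      (length_le_of_append_replicate_append_cons_eq hab hts h)
  List.append_inj_left h hlen

end Marker

/-- The even-palindrome language separates distinct words. -/
theorem palindrome_separates (α : Type*) (a b : α) (hab : a ≠ b) :
    ∀ u u' : List α, u ≠ u' →
      ∃ v : List α, v ≠ [] ∧ u ++ v ∈ Opal α ∧ u' ++ v ∉ Opal α := by
  intro u u' hne
  let n := max u.length u'.length
  let z := List.replicate n a ++ [b]
  refine ⟨z ++ (u ++ z).reverse, by simp [z],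
    ⟨u ++ z, (List.append_assoc ..).symm⟩, fun hmem => hne ?_⟩
  rw [← List.append_assoc] at hmem
  have hcomm : (u' ++ z) ++ (u ++ z).reverse = (u ++ z) ++ (u' ++ z).reverse :=
    append_reverse_comm_of_mem_opal hmem
  have hu : u.length ≤ u'.length + n := le_add_left (le_max_left _ _)
  have hu' : u'.length ≤ u.length + n := le_add_left (le_max_right _ _)
  simp only [z, List.append_assoc, List.singleton_append] at hcomm
  exact eq_of_append_replicate_append_cons_eq hab hu hu' hcomm.symm
end

section
/- Shorter-word case of palindrome separation: let Σ be any type, let u, u' : List Σ be words with u'.length < u.length, and let a : Σ be any letter different from the element of u at position u'.length (0-indexed). Then u ++ [a, a] ++ reverse u ∈ O_pal, while u' ++ [a, a] ++ reverse u ∉ O_pal. -/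
section

variable {α : Type*} {x : List α}

theorem append_append_reverse_mem_Opal (hx : x ∈ Opal α) (u : List α) :
    u ++ x ++ u.reverse ∈ Opal α := by
  obtain ⟨w, rfl⟩ := hx
  exact ⟨u ++ w, by simp⟩

theorem palindrome_of_mem_Opal (hx : x ∈ Opal α) : x.Palindrome := by
  obtain ⟨w, rfl⟩ := hx
  exact List.Palindrome.append_reverse w

theorem reverse_suffix_iff_prefix_of_palindrome (hx : x.Palindrome) {u : List α} :
    u.reverse <:+ x ↔ u <+: x := by
  rw [← List.reverse_suffix (l₁ := u), hx.reverse_eq]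

end

/-- Shorter-word case of palindrome separation. -/
theorem palindrome_separates_shorter (α : Type*) (u u' : List α)
    (hlen : u'.length < u.length) (a : α) (ha : a ≠ u.get ⟨u'.length, hlen⟩) :
    u ++ [a, a] ++ u.reverse ∈ Opal α ∧ u' ++ [a, a] ++ u.reverse ∉ Opal α := by
  have hpair : [a, a] ∈ Opal α := ⟨[a], rfl⟩
  refine ⟨append_append_reverse_mem_Opal hpair u, fun hmem ↦ ha ?_⟩
  have hprefix : u <+: u' ++ [a, a] ++ u.reverse :=
    (reverse_suffix_iff_prefix_of_palindrome (palindrome_of_mem_Opal hmem)).mp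
      (List.suffix_append _ _)
  have hget : u[u'.length] = a := by
    rw [hprefix.getElem hlen]
    simp
  exact hget.symm
end

section
/- The unary square objective separates distinct words: for all natural numbers i, j with i ≠ j, there exists a natural number m ≥ 1 such that i + m is a perfect square (there exists k : ℕ with i + m = k^2) and j + m is not a perfect square (there is no k : ℕ with j + m = k^2). -/
/-!
A sufficiently large square has no other square near it: if `k ^ 2 = n ^ 2 + d` with `d ≠ 0`, then
`|k| + |n|` divides `d`, so `|n| ≤ |d|`. Choose `m` so that `i + m = n ^ 2` with `n > |j - i|`;
then `j + m = n ^ 2 + (j - i)` is not a square.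
-/

theorem abs_add_abs_dvd_sq_sub_sq {R : Type*} [CommRing R] [LinearOrder R] [IsOrderedRing R]
    (a b : R) : |a| + |b| ∣ a ^ 2 - b ^ 2 :=
  ⟨|a| - |b|, by rw [← sq_sub_sq, sq_abs, sq_abs]⟩

theorem not_isSquare_sq_add_of_abs_lt {n d : ℤ} (hd : d ≠ 0) (hdn : |d| < |n|) :
    ¬ IsSquare (n ^ 2 + d) := by
  rw [isSquare_iff_exists_sq]
  rintro ⟨k, hk⟩
  have hdvd : |k| + |n| ∣ d := by
    simpa only [← hk, add_sub_cancel_left] using abs_add_abs_dvd_sq_sub_sq k n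
  have hlt : |d| < |k| + |n| := lt_add_of_nonneg_of_lt (abs_nonneg k) hdn
  exact hd (Int.eq_zero_of_abs_lt_dvd hdvd hlt)

/-- The unary square objective separates distinct words: for distinct unary
words `a^i ≠ a^j` there is a nonempty suffix `a^m` with `a^(i+m)` of square
length and `a^(j+m)` not of square length. -/
theorem unary_square_separates :
    ∀ i j : ℕ, i ≠ j →
      ∃ m : ℕ, 1 ≤ m ∧ (∃ k : ℕ, i + m = k ^ 2) ∧ ¬ (∃ k : ℕ, j + m = k ^ 2) := by
  intro i j hij
  have hi : i < (i + j + 1) ^ 2 :=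
    lt_of_lt_of_le (by lia : i < i + j + 1) (Nat.le_self_pow two_ne_zero _)
  obtain ⟨m, hm⟩ := Nat.exists_eq_add_of_le hi.le
  refine ⟨m, by lia, ⟨i + j + 1, hm.symm⟩, ?_⟩
  rintro ⟨k, hk⟩
  have hgap : ((i + j + 1 : ℕ) : ℤ) ^ 2 + (j - i) = (k : ℤ) ^ 2 := by
    zify at hm hk ⊢
    linear_combination hm + hk
  have hlt : |(j - i : ℤ)| < |((i + j + 1 : ℕ) : ℤ)| := by grind
  exact not_isSquare_sq_add_of_abs_lt (by lia) hlt (hgap ▸ IsSquare.sq (k : ℤ))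
end

section
/- The syntactic precongruence induced by the unary square objective is the identity (the unary square language is domain-shattering): for all natural numbers i, j, the following are equivalent: (a) for all natural numbers s, t, if s + i + t is a perfect square (∃ k, s + i + t = k^2) then s + j + t is a perfect square (∃ k, s + j + t = k^2); (b) i = j. -/
/-!
In a set `L` of natural numbers, pick an element `n ≥ i` so isolated that no other element of `L`
lies within `i + j` of it. The context `n - i` sends `i` to `n ∈ L` and `j` to `n - i + j`, which
can only belong to `L` if it is `n` itself. Perfect powers with a fixed exponent `d ≥ 2` contain
such elements because the gaps between consecutive ones tend to infinity.
-/

/-- The syntactic precongruence of a language `L`: every two-sided context that sends `x` into `L`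
also sends `y` into `L`. The monoid is written additively, as befits words over a one-letter
alphabet. -/
def SyntacticLE {M : Type*} [Add M] (L : Set M) (x y : M) : Prop :=
  ∀ s t : M, s + x + t ∈ L → s + y + t ∈ L

theorem SyntacticLE.refl {M : Type*} [Add M] (L : Set M) (x : M) : SyntacticLE L x x :=
  fun _ _ hx => hx

/-- `L` contains arbitrarily isolated elements: for every radius `r`, some `n ∈ L` is the only
element of `L` at distance at most `r` from `n`. The two inequalities on `m` say `|m - n| ≤ r`
without truncated subtraction. The bound `r ≤ n` rules out sets such as `{0}`, which have an
isolated element but no room below it. -/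
def HasIsolatedElements (L : Set ℕ) : Prop :=
  ∀ r : ℕ, ∃ n ∈ L, r ≤ n ∧ ∀ m ∈ L, m ≤ n + r → n ≤ m + r → m = n

namespace HasIsolatedElements

variable {L : Set ℕ} {i j : ℕ}

theorem eq_of_forall_add_mem (hL : HasIsolatedElements L)
    (hij : ∀ s : ℕ, s + i ∈ L → s + j ∈ L) : i = j := by
  obtain ⟨n, hnL, hn, isolated⟩ := hL (i + j)
  have hi : n - i + i = n := Nat.sub_add_cancel (by lia)
  have hj : n - i + j ∈ L := hij (n - i) (hi.symm ▸ hnL)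
  have heq : n - i + j = n := isolated _ hj (by lia) (by lia)
  exact Nat.add_left_cancel (hi.trans heq.symm)

theorem syntacticLE_iff_eq (hL : HasIsolatedElements L) : SyntacticLE L i j ↔ i = j where
  mp hij := hL.eq_of_forall_add_mem fun s => hij s 0
  mpr hij := hij ▸ SyntacticLE.refl L i

end HasIsolatedElements

section Powers

variable {d : ℕ}

theorem pow_add_self_lt_add_one_pow (hd : 2 ≤ d) (x : ℕ) : x ^ d + x < (x + 1) ^ d := by
  obtain ⟨e, rfl⟩ := Nat.exists_eq_add_of_le' hd
  have hpow : x ^ (e + 1) ≤ (x + 1) ^ (e + 1) := by gcongr; lia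
  have hself : x + 1 ≤ (x + 1) ^ (e + 1) := Nat.le_self_pow e.succ_ne_zero _
  calc x ^ (e + 2) + x
      < x ^ (e + 1) * x + (x + 1) := by rw [pow_succ]; lia
    _ ≤ (x + 1) ^ (e + 1) * x + (x + 1) ^ (e + 1) := by gcongr
    _ = (x + 1) ^ (e + 2) := by ring

theorem hasIsolatedElements_pow (hd : 2 ≤ d) :
    HasIsolatedElements {n : ℕ | ∃ k : ℕ, n = k ^ d} := by
  intro r
  have gap_below : r ^ d + r < (r + 1) ^ d := pow_add_self_lt_add_one_pow hd r
  have gap_above : (r + 1) ^ d + (r + 1) < (r + 2) ^ d := pow_add_self_lt_add_one_pow hd (r + 1)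
  refine ⟨(r + 1) ^ d, ⟨r + 1, rfl⟩, by lia, ?_⟩
  rintro _ ⟨k, rfl⟩ hupper hlower
  have hk_lt : k < r + 2 := lt_of_pow_lt_pow_left' d (by lia)
  have hlt_k : r < k := lt_of_pow_lt_pow_left' d (by lia)
  rw [show k = r + 1 by lia]

theorem unary_square_syntactic_precongruence_eq_id_general (hd : 2 ≤ d) (i j : ℕ) :
    (∀ s t : ℕ, (∃ k : ℕ, s + i + t = k ^ d) → (∃ k : ℕ, s + j + t = k ^ d)) ↔ i = j :=
  (hasIsolatedElements_pow hd).syntacticLE_iff_eq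

end Powers

/-- The syntactic precongruence induced by the unary square objective is the
identity: the unary square language is domain-shattering. -/
theorem unary_square_syntactic_precongruence_eq_id :
    ∀ i j : ℕ,
      (∀ s t : ℕ, (∃ k : ℕ, s + i + t = k ^ 2) → (∃ k : ℕ, s + j + t = k ^ 2)) ↔ i = j :=
  unary_square_syntactic_precongruence_eq_id_general le_rfl
end

section
/- Distinct state pairs are syntactically inequivalent for the path language: let Q be a type with initial state q₀ ∈ Q and a nonempty set of final states F ⊆ Q, and let L be the associated path language over the alphabet Q × Q. Then for all states q, q', r, r' : Q with (q, q') ≠ (r, r'), there exist words u, v : List (Q × Q) such that u ++ [(q, q')] ++ v ∈ L and u ++ [(r, r')] ++ v ∉ L. -/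
/-- The path language over the alphabet `Q × Q` of state pairs: a word belongs
to it iff it is empty and `q0 ∈ F`, or it is nonempty, starts in `q0`, its
adjacent letters are continuous, and it ends in a final state. -/
def PathLang {Q : Type*} (q0 : Q) (F : Set Q) : Set (List (Q × Q)) :=
  {x : List (Q × Q) |
    (x = [] ∧ q0 ∈ F) ∨
    (∃ h : x ≠ [],
      (x.head h).1 = q0 ∧
      x.Chain' (fun p q => p.2 = q.1) ∧
      (x.getLast h).2 ∈ F)}

namespace PathLang

variable {Q : Type*} {q₀ : Q} {F : Set Q}

@[simp]
theorem nil_mem_iff : [] ∈ PathLang q₀ F ↔ q₀ ∈ F := by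
  simp [PathLang]

theorem cons_mem_iff_isChain {a : Q × Q} {x : List (Q × Q)} :
    a :: x ∈ PathLang q₀ F ↔
      a.1 = q₀ ∧ (a :: x).IsChain (fun p q => p.2 = q.1) ∧
        ((a :: x).getLast (List.cons_ne_nil a x)).2 ∈ F :=
  (or_iff_right fun h => List.cons_ne_nil a x h.1).trans
    (exists_prop_of_true (List.cons_ne_nil a x))

@[simp]
theorem cons_mem_iff {a : Q × Q} {x : List (Q × Q)} :
    a :: x ∈ PathLang q₀ F ↔ a.1 = q₀ ∧ x ∈ PathLang a.2 F := by
  cases x with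
  | nil => simp [cons_mem_iff_isChain]
  | cons b x => simp [cons_mem_iff_isChain, and_assoc, eq_comm (a := a.2)]

theorem append_singleton_append_mem_iff {q q' f : Q} {a : Q × Q} (hf : f ∈ F) :
    [(q₀, q)] ++ [a] ++ [(q', f)] ∈ PathLang q₀ F ↔ a = (q, q') := by
  simp [hf, Prod.ext_iff, eq_comm (a := q')]

end PathLang

/-- Distinct state pairs are syntactically inequivalent for the path language. -/
theorem distinct_pairs_syntactically_inequivalent (Q : Type*) (q0 : Q) (F : Set Q)
    (hF : F.Nonempty) :
    ∀ q q' r r' : Q, (q, q') ≠ (r, r') →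
      ∃ u v : List (Q × Q),
        u ++ [(q, q')] ++ v ∈ PathLang q0 F ∧ u ++ [(r, r')] ++ v ∉ PathLang q0 F := by
  intro q q' r r' hne
  obtain ⟨f, hf⟩ := hF
  refine ⟨[(q0, q)], [(q', f)], ?_, fun replaced_mem => hne ?_⟩
  · exact (PathLang.append_singleton_append_mem_iff hf).mpr rfl
  · exact ((PathLang.append_singleton_append_mem_iff hf).mp replaced_mem).symm
end

section
/- Normal forms of words modulo the syntactic congruence of the path language: let Q be a type with initial state q₀ ∈ Q and final states F ⊆ Q, and let L be the associated path language over the alphabet Q × Q. Then for every word x : List (Q × Q), at least one of the following holds: (a) x is syntactically congruent to the empty word, i.e., for all u, v : List (Q × Q), u ++ x ++ v ∈ L ↔ u ++ v ∈ L; (b) there exists a pair p : Q × Q such that x is syntactically congruent to the single-letter word [p], i.e., for all u, v, u ++ x ++ v ∈ L ↔ u ++ [p] ++ v ∈ L; (c) x is dead, i.e., for all u, v : List (Q × Q), u ++ x ++ v ∉ L. -/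
/-!
Bordering a word `x` by the loops `(q0, q0)` on the left and `(f, f)` on the right turns
membership in the path language, for empty and nonempty words alike, into the single condition
that for some `f ∈ F` the bordered word is a run. Whether a word is a run depends on a nonempty
factor only through whether that factor is a run and through its two end states, so a nonempty
run may be contracted to one letter, and a word that is not a run is dead.
-/

theorem isChain_append_append_iff {α : Type*} {R : α → α → Prop} {x : List α} (hx : x ≠ [])
    (u v : List α) :
    (u ++ x ++ v).IsChain R ↔
      u.IsChain R ∧ x.IsChain R ∧ v.IsChain R ∧
        (∀ a ∈ u.getLast?, R a (x.head hx)) ∧ ∀ b ∈ v.head?, R (x.getLast hx) b := by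
  simp only [List.append_assoc, List.isChain_append, List.head?_append_of_ne_nil x hx,
    List.head?_eq_some_head hx, List.getLast?_eq_some_getLast hx, Option.mem_some_iff,
    forall_eq']
  tauto

section Runs

variable {Q : Type*} {x : List (Q × Q)}

/-- A run: a word of state pairs in which each letter begins in the state where the previous one
ends. Unlike for `PathLang`, the first and last states are arbitrary. -/
def IsRun (x : List (Q × Q)) : Prop :=
  x.IsChain fun p q => p.2 = q.1

/-- The states in which a nonempty word starts and ends. As a letter, this pair is the normal form
of a nonempty run. -/
def endStates (x : List (Q × Q)) (hx : x ≠ []) : Q × Q :=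
  ((x.head hx).1, (x.getLast hx).2)

theorem IsRun.append_append_iff (hrun : IsRun x) (hx : x ≠ []) (u v : List (Q × Q)) :
    IsRun (u ++ x ++ v) ↔ IsRun (u ++ [endStates x hx] ++ v) := by
  unfold IsRun at *
  rw [isChain_append_append_iff hx, isChain_append_append_iff (List.cons_ne_nil _ _)]
  simp only [hrun, endStates, List.isChain_singleton, List.head_cons, List.getLast_singleton]

variable {q0 : Q} {F : Set Q}

theorem mem_pathLang_iff_of_ne_nil (hx : x ≠ []) :
    x ∈ PathLang q0 F ↔ (x.head hx).1 = q0 ∧ IsRun x ∧ (x.getLast hx).2 ∈ F := by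
  constructor
  · rintro (⟨hnil, -⟩ | ⟨_, hpath⟩)
    · exact absurd hnil hx
    · exact hpath
  · exact fun hpath => .inr ⟨hx, hpath⟩

theorem mem_pathLang_iff_exists_isRun :
    x ∈ PathLang q0 F ↔ ∃ f ∈ F, IsRun ([(q0, q0)] ++ x ++ [(f, f)]) := by
  by_cases hx : x = []
  · simp [hx, PathLang, IsRun]
  · have hborder (f : Q) : IsRun ([(q0, q0)] ++ x ++ [(f, f)]) ↔
        IsRun x ∧ q0 = (x.head hx).1 ∧ (x.getLast hx).2 = f := by
      rw [IsRun, isChain_append_append_iff hx]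
      simp [IsRun]
    rw [mem_pathLang_iff_of_ne_nil hx]
    constructor
    · rintro ⟨hstart, hrun, hfinal⟩
      exact ⟨_, hfinal, (hborder _).mpr ⟨hrun, hstart.symm, rfl⟩⟩
    · rintro ⟨f, hf, hbordered⟩
      obtain ⟨hrun, hstart, rfl⟩ := (hborder f).mp hbordered
      exact ⟨hstart.symm, hrun, hf⟩

theorem append_append_mem_pathLang_iff_exists_isRun (u v : List (Q × Q)) :
    u ++ x ++ v ∈ PathLang q0 F ↔
      ∃ f ∈ F, IsRun ((q0, q0) :: u ++ x ++ (v ++ [(f, f)])) := by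
  simp only [mem_pathLang_iff_exists_isRun, List.append_assoc, List.cons_append, List.nil_append]

theorem IsRun.append_append_mem_pathLang_iff (hrun : IsRun x) (hx : x ≠ [])
    (u v : List (Q × Q)) :
    u ++ x ++ v ∈ PathLang q0 F ↔ u ++ [endStates x hx] ++ v ∈ PathLang q0 F := by
  simp only [append_append_mem_pathLang_iff_exists_isRun, hrun.append_append_iff hx]

theorem isRun_of_append_append_mem_pathLang {u v : List (Q × Q)}
    (h : u ++ x ++ v ∈ PathLang q0 F) : IsRun x := by
  obtain ⟨f, -, hrun⟩ := (append_append_mem_pathLang_iff_exists_isRun u v).mp h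
  exact List.IsChain.infix hrun (List.infix_append _ _ _)

end Runs

/-- Normal forms of words modulo the syntactic congruence of the path
language: every word is congruent to the empty word, congruent to a
single-letter word, or dead. -/
theorem pathLang_normal_forms (Q : Type*) (q0 : Q) (F : Set Q) :
    ∀ x : List (Q × Q),
      (∀ u v : List (Q × Q), u ++ x ++ v ∈ PathLang q0 F ↔ u ++ v ∈ PathLang q0 F) ∨
      (∃ p : Q × Q, ∀ u v : List (Q × Q),
        u ++ x ++ v ∈ PathLang q0 F ↔ u ++ [p] ++ v ∈ PathLang q0 F) ∨
      (∀ u v : List (Q × Q), u ++ x ++ v ∉ PathLang q0 F) := by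
  intro x
  by_cases hx : x = []
  · left
    simp only [hx, List.append_nil, implies_true]
  by_cases hrun : IsRun x
  · exact .inr (.inl ⟨endStates x hx, hrun.append_append_mem_pathLang_iff hx⟩)
  · exact .inr (.inr fun _ _ h => hrun (isRun_of_append_append_mem_pathLang h))
end
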